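/- Let R be a strongly connected self-relation on a finite nonempty set X having a fixed point (there exists x₀ with R x₀ x₀), and let j, p ≥ 1 satisfy R^j = R^{j+p}. Then R^j is the full relation: R^j x y holds for all x, y ∈ X. Consequently K_{R^j} and L_{R^j} consist of all nonempty finite subsets of X (they are full simplices, hence contractible). -/

import Mathlib

/-- The Dowker complex `K_R` of a relation `R : X → Y → Prop`: the set of
nonempty finite subsets `σ ⊆ X` such that there is a `y` with `R x y` for all `x ∈ σ`. -/
def dowkerK {X Y : Type*} (R : X → Y → Prop) : Set (Finset X) :=
  {σ | σ.Nonempty ∧ ∃ y, ∀ x ∈ σ, R x y}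

/-- The Dowker complex `L_R` of a relation `R : X → Y → Prop`: the set of
nonempty finite subsets `τ ⊆ Y` such that there is an `x` with `R x y` for all `y ∈ τ`. -/
def dowkerL {X Y : Type*} (R : X → Y → Prop) : Set (Finset Y) :=
  {τ | τ.Nonempty ∧ ∃ x, ∀ y ∈ τ, R x y}

/-- Composition of relations: `relComp R₁ R₂` is the paper's `R₂ ∘ R₁`,
i.e. `(R₂ ∘ R₁) x z ↔ ∃ y, R₁ x y ∧ R₂ y z`. -/
def relComp {X Y Z : Type*} (R₁ : X → Y → Prop) (R₂ : Y → Z → Prop) : X → Z → Prop :=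
  fun x z => ∃ y, R₁ x y ∧ R₂ y z

/-- Powers of a self-relation: `R^0` is equality and `R^(n+1) = R ∘ R^n`. -/
def relPow {X : Type*} (R : X → X → Prop) : ℕ → X → X → Prop
  | 0 => Eq
  | n + 1 => relComp (relPow R n) R

/-!
A path from `x` to `y` through a fixed point `x₀` can be lengthened at will by waiting at `x₀`, so
`R^n x y` holds for all large `n`. As `R^j = R^(j + k * p)` for every `k`, and `j + k * p` is
arbitrarily large, already `R^j x y` holds.
-/

section Dowker

variable {X Y : Type*} {R : X → Y → Prop}

theorem dowkerK_eq_setOf_nonempty {y : Y} (hy : ∀ x, R x y) :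
    dowkerK R = {σ : Finset X | σ.Nonempty} :=
  Set.ext fun _ ↦ and_iff_left ⟨y, fun x _ ↦ hy x⟩

theorem dowkerL_eq_setOf_nonempty {x : X} (hx : ∀ y, R x y) :
    dowkerL R = {τ : Finset Y | τ.Nonempty} :=
  dowkerK_eq_setOf_nonempty (R := flip R) hx

end Dowker

section Powers

variable {X : Type*} (R : X → X → Prop)

theorem relPow_add (m n : ℕ) :
    relPow R (m + n) = relComp (relPow R m) (relPow R n) := by
  induction n with
  | zero => exact Relation.comp_eq.symm
  | succ n ih => exact (congrArg (relComp · R) ih).trans Relation.comp_assoc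

variable {R}

theorem relPow_self {x : X} (h : R x x) (n : ℕ) : relPow R n x x := by
  induction n with
  | zero => rfl
  | succ n ih => exact ⟨x, ih, h⟩

theorem relPow_of_add_le {x x₀ y : X} {a b n : ℕ} (h₀ : R x₀ x₀) (ha : relPow R a x x₀)
    (hb : relPow R b x₀ y) (hn : a + b ≤ n) : relPow R n x y := by
  obtain ⟨m, rfl⟩ := Nat.exists_eq_add_of_le hn
  rw [Nat.add_right_comm, relPow_add, relPow_add]
  exact ⟨x₀, ⟨x₀, ha, relPow_self h₀ m⟩, hb⟩

theorem periodic_relPow_add {j p : ℕ} (h : relPow R j = relPow R (j + p)) :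
    Function.Periodic (fun n ↦ relPow R (j + n)) p := fun n ↦
  calc relPow R (j + (n + p))
    _ = relPow R (j + p + n) := by rw [Nat.add_right_comm, Nat.add_assoc]
    _ = relPow R (j + n) := by rw [relPow_add, ← h, ← relPow_add]

theorem relPow_eq_relPow_add_mul {j p : ℕ} (h : relPow R j = relPow R (j + p)) (k : ℕ) :
    relPow R j = relPow R (j + k * p) :=
  ((periodic_relPow_add h).nat_mul_eq k).symm

theorem relPow_of_eq_relPow_add (hconn : ∀ x y, ∃ n, relPow R n x y) (hfix : ∃ x₀, R x₀ x₀)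
    {j p : ℕ} (hp : 1 ≤ p) (hper : relPow R j = relPow R (j + p)) (x y : X) :
    relPow R j x y := by
  obtain ⟨x₀, h₀⟩ := hfix
  obtain ⟨a, ha⟩ := hconn x x₀
  obtain ⟨b, hb⟩ := hconn x₀ y
  have hlen : a + b ≤ j + (a + b) * p :=
    (Nat.le_mul_of_pos_right _ hp).trans (Nat.le_add_left _ _)
  rw [relPow_eq_relPow_add_mul hper (a + b)]
  exact relPow_of_add_le h₀ ha hb hlen

end Powers

theorem stmt16_general {X : Type*} (R : X → X → Prop)
    (hsc : ∀ x y : X, ∃ n : ℕ, relPow R n x y)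
    (hfix : ∃ x₀, R x₀ x₀)
    (j p : ℕ) (hp : 1 ≤ p)
    (hper : relPow R j = relPow R (j + p)) :
    (∀ x y : X, relPow R j x y) ∧
    dowkerK (relPow R j) = {σ : Finset X | σ.Nonempty} ∧
    dowkerL (relPow R j) = {τ : Finset X | τ.Nonempty} := by
  have hfull := relPow_of_eq_relPow_add hsc hfix hp hper
  obtain ⟨x₀, -⟩ := hfix
  exact ⟨hfull, dowkerK_eq_setOf_nonempty (hfull · x₀), dowkerL_eq_setOf_nonempty (hfull x₀)⟩

theorem stmt16 {X : Type*} [Fintype X] [Nonempty X] (R : X → X → Prop)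
    (hsc : ∀ x y : X, ∃ n : ℕ, 1 ≤ n ∧ relPow R n x y)
    (hfix : ∃ x₀, R x₀ x₀)
    (j p : ℕ) (hj : 1 ≤ j) (hp : 1 ≤ p)
    (hper : relPow R j = relPow R (j + p)) :
    (∀ x y : X, relPow R j x y) ∧
    dowkerK (relPow R j) = {σ : Finset X | σ.Nonempty} ∧
    dowkerL (relPow R j) = {τ : Finset X | τ.Nonempty} :=
  stmt16_general R (fun x y ↦ (hsc x y).imp fun _ ↦ And.right) hfix j p hp hper
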